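/- An algebra A over a field of characteristic not 2 is a binary Leibniz algebra (every two-generated subalgebra is a left Leibniz algebra) if and only if A satisfies the identities ⟨a,a,b⟩ = 0, ⟨a,b,a⟩ = 0, and ⟨a,b,ab⟩ = 0 for all a,b ∈ A. -/

import Mathlib

/-- The Leibniz discriminant ⟨a,b,c⟩ = (ab)c - a(bc) + b(ac). -/
def leibTriple {A : Type*} [NonUnitalNonAssocRing A] (a b c : A) : A :=
  (a * b) * c - a * (b * c) + b * (a * c)

/-! Proof idea: the identities pass to `A[ε]`, so an identity in words of total degree `n`
can be differentiated along left multiplication by a generator, giving degree `n + 1`. -/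

/-- The identities, together with absence of 2-torsion. -/
structure GoodRing (A : Type*) [NonUnitalNonAssocRing A] : Prop where
  two : ∀ a : A, a + a = 0 → a = 0
  aab : ∀ a b : A, leibTriple a a b = 0
  aba : ∀ a b : A, leibTriple a b a = 0
  abab : ∀ a b : A, leibTriple a b (a * b) = 0

section basic
variable {A : Type*} [NonUnitalNonAssocRing A]

theorem lt_add1 (a a' b c : A) :
    leibTriple (a + a') b c = leibTriple a b c + leibTriple a' b c := by
  simp only [leibTriple, add_mul, mul_add]; abel

theorem lt_add2 (a b b' c : A) :
    leibTriple a (b + b') c = leibTriple a b c + leibTriple a b' c := by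
  simp only [leibTriple, add_mul, mul_add]; abel

theorem lt_add3 (a b c c' : A) :
    leibTriple a b (c + c') = leibTriple a b c + leibTriple a b c' := by
  simp only [leibTriple, add_mul, mul_add]; abel

namespace GoodRing

theorem swap12 (h : GoodRing A) (a b c : A) : leibTriple a b c + leibTriple b a c = 0 := by
  have := h.aab (a + b) c
  rw [lt_add1, lt_add2, lt_add2, h.aab, h.aab, zero_add, add_zero] at this
  exact this

theorem swap13 (h : GoodRing A) (a b c : A) : leibTriple a b c + leibTriple c b a = 0 := by
  have := h.aba (a + c) b
  rw [lt_add1, lt_add3, lt_add3, h.aba, h.aba, zero_add, add_zero] at this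
  exact this

theorem s12 (h : GoodRing A) (a b c : A) : leibTriple b a c = - leibTriple a b c :=
  eq_neg_of_add_eq_zero_right (h.swap12 a b c)

theorem s13 (h : GoodRing A) (a b c : A) : leibTriple c b a = - leibTriple a b c :=
  eq_neg_of_add_eq_zero_right (h.swap13 a b c)

theorem s23 (h : GoodRing A) (a b c : A) : leibTriple a c b = - leibTriple a b c := by
  rw [h.s12 c a b, h.s13 b a c, h.s12 a b c]; abel

theorem abb (h : GoodRing A) (a b : A) : leibTriple a b b = 0 := by
  rw [h.s12 b a b, h.aba, neg_zero]

theorem jordan_mul (h : GoodRing A) (a b c : A) : (a * b + b * a) * c = 0 := by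
  have := h.swap12 a b c
  simp only [leibTriple] at this
  rw [← this, add_mul]; abel

theorem jordan1 (h : GoodRing A) (a b c d : A) : leibTriple (a * b + b * a) c d = 0 := by
  simp only [leibTriple, h.jordan_mul, zero_mul, mul_zero, sub_zero, add_zero]

theorem comm1 (h : GoodRing A) (a b c d : A) : leibTriple (b * a) c d = - leibTriple (a * b) c d := by
  have := h.jordan1 a b c d
  rw [lt_add1] at this
  exact eq_neg_of_add_eq_zero_right this

theorem comm2 (h : GoodRing A) (a b c d : A) : leibTriple c (b * a) d = - leibTriple c (a * b) d := by
  rw [h.s12 (b * a) c d, h.comm1 a b, h.s12 (a * b) c d]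

theorem comm3 (h : GoodRing A) (a b c d : A) : leibTriple c d (b * a) = - leibTriple c d (a * b) := by
  rw [h.s13 (b * a) d c, h.comm1 a b, h.s13 (a * b) d c]

theorem sq1 (h : GoodRing A) (a c d : A) : leibTriple (a * a) c d = 0 := by
  apply h.two
  rw [← lt_add1]; exact h.jordan1 a a c d

theorem sq2 (h : GoodRing A) (a c d : A) : leibTriple c (a * a) d = 0 := by
  rw [h.s12 (a * a) c d, h.sq1, neg_zero]

theorem pol_a (h : GoodRing A) (a c b : A) : leibTriple a b (c * b) + leibTriple c b (a * b) = 0 := by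
  have := h.abab (a + c) b
  rw [add_comm]
  simpa only [add_mul, lt_add1, lt_add3, h.abab, zero_add, add_zero] using this

theorem pol_b (h : GoodRing A) (a b d : A) : leibTriple a b (a * d) + leibTriple a d (a * b) = 0 := by
  have := h.abab a (b + d)
  rw [add_comm]
  simpa only [mul_add, lt_add2, lt_add3, h.abab, zero_add, add_zero] using this

/-- Key identity: left multiplication by `b` is self-adjoint for `J(b, ·, ·)`. -/
theorem key (h : GoodRing A) (b a c : A) : leibTriple b (b * a) c = leibTriple b a (b * c) := by
  have h1 := h.pol_b b a c
  rw [h.s23 b (b * a) c] at h1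
  rw [eq_comm, ← sub_eq_zero, sub_eq_add_neg]; exact h1

theorem key_lin (h : GoodRing A) (b d a c : A) : leibTriple b (d * a) c + leibTriple d (b * a) c =
    leibTriple b a (d * c) + leibTriple d a (b * c) := by
  have h1 := h.key (b + d) a c
  simp only [add_mul, lt_add1, lt_add2, lt_add3, h.key b a c, h.key d a c] at h1
  rw [← sub_eq_zero] at h1 ⊢
  rw [← h1]; abel

end GoodRing
end basic

/-- The ring `A[ε]`. -/
@[ext] structure DualRing (A : Type*) where
  re : A
  ep : A

namespace DualRing
variable {A : Type*} [NonUnitalNonAssocRing A]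

instance : Zero (DualRing A) := ⟨⟨0, 0⟩⟩
instance : Add (DualRing A) := ⟨fun a b => ⟨a.re + b.re, a.ep + b.ep⟩⟩
instance : Neg (DualRing A) := ⟨fun a => ⟨-a.re, -a.ep⟩⟩
instance : Mul (DualRing A) := ⟨fun a b => ⟨a.re * b.re, a.re * b.ep + a.ep * b.re⟩⟩

@[simp] theorem zero_re : (0 : DualRing A).re = 0 := rfl
@[simp] theorem zero_ep : (0 : DualRing A).ep = 0 := rfl
@[simp] theorem add_re (a b : DualRing A) : (a + b).re = a.re + b.re := rfl
@[simp] theorem add_ep (a b : DualRing A) : (a + b).ep = a.ep + b.ep := rfl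
@[simp] theorem neg_re (a : DualRing A) : (-a).re = -a.re := rfl
@[simp] theorem neg_ep (a : DualRing A) : (-a).ep = -a.ep := rfl
@[simp] theorem mul_re (a b : DualRing A) : (a * b).re = a.re * b.re := rfl
@[simp] theorem mul_ep (a b : DualRing A) : (a * b).ep = a.re * b.ep + a.ep * b.re := rfl

instance : NonUnitalNonAssocRing (DualRing A) where
  add_assoc a b c := by ext <;> simp [add_assoc]
  zero_add a := by ext <;> simp
  add_zero a := by ext <;> simp
  add_comm a b := by ext <;> simp [add_comm]
  nsmul := nsmulRec
  zsmul := zsmulRec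
  neg_add_cancel a := by ext <;> simp
  zero_mul a := by ext <;> simp
  mul_zero a := by ext <;> simp
  left_distrib a b c := by
    ext
    · simp [mul_add]
    · simp only [mul_ep, add_re, add_ep, mul_add]; abel
  right_distrib a b c := by
    ext
    · simp [add_mul]
    · simp only [mul_ep, add_re, add_ep, add_mul]; abel

theorem lt_re (a b c : DualRing A) :
    (leibTriple a b c).re = leibTriple a.re b.re c.re := by
  simp [leibTriple, sub_eq_add_neg]

theorem lt_ep (a b c : DualRing A) :
    (leibTriple a b c).ep = leibTriple a.ep b.re c.re + leibTriple a.re b.ep c.re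
      + leibTriple a.re b.re c.ep := by
  simp only [leibTriple, sub_eq_add_neg, mul_ep, mul_re, add_ep, neg_ep, mul_add, add_mul]
  abel

theorem good (h : GoodRing A) : GoodRing (DualRing A) where
  two a ha := by
    have h1 := congrArg DualRing.re ha
    have h2 := congrArg DualRing.ep ha
    ext
    · exact h.two _ h1
    · exact h.two _ h2
  aab a b := by
    ext
    · rw [lt_re, h.aab]; rfl
    · rw [lt_ep, h.aab, h.swap12, add_zero]; rfl
  aba a b := by
    ext
    · rw [lt_re, h.aba]; rfl
    · rw [lt_ep, h.aba, add_zero, h.swap13]; rfl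
  abab a b := by
    ext
    · rw [lt_re, mul_re, h.abab]; rfl
    · rw [lt_ep, mul_re, mul_ep, lt_add3, zero_ep]
      have h1 := h.pol_a a.re a.ep b.re
      have h2 := h.pol_b a.re b.re b.ep
      rw [← add_zero (0 : A)]
      nth_rewrite 1 [← h1]
      rw [← h2]; abel

end DualRing

section words
variable {A : Type*} [NonUnitalNonAssocRing A]

/-- Right-normed word in the generators `g false`, `g true`. -/
def rnWord (g : Bool → A) (k : Bool) : List Bool → A
  | [] => g k
  | a :: m => g a * rnWord g k m

/-- All triples of words of total degree at most `N + 3` have vanishing discriminant. -/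
def WordsVanish (g : Bool → A) (N : ℕ) : Prop :=
  ∀ (i j k : Bool) (u v w : List Bool), u.length + v.length + w.length ≤ N →
    leibTriple (rnWord g i u) (rnWord g j v) (rnWord g k w) = 0

/-- The generators moved infinitesimally along left multiplication by `g a`. -/
def dualGen (g : Bool → A) (a : Bool) : Bool → DualRing A := fun b => ⟨g b, g a * g b⟩

theorem dual_word (g : Bool → A) (a : Bool) (N : ℕ) (hN : WordsVanish g N) (k : Bool) :
    ∀ m : List Bool, m.length ≤ N + 1 →
      rnWord (dualGen g a) k m = ⟨rnWord g k m, g a * rnWord g k m⟩ := by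
  intro m
  induction m with
  | nil => intro _; rfl
  | cons b m ih =>
    intro hm
    simp only [List.length_cons] at hm
    have h1 := hN a b k [] [] m (by simp; omega)
    simp only [rnWord, leibTriple] at h1
    simp only [rnWord]
    rw [ih (by omega)]
    ext
    · rfl
    · simp only [DualRing.mul_ep, dualGen]
      rw [← sub_eq_zero, ← h1]; abel

theorem invariance (g : Bool → A) (N : ℕ) (hN : WordsVanish g N)
    (hD : ∀ a, WordsVanish (dualGen g a) N) (a i j k : Bool) (u v w : List Bool)
    (hl : u.length + v.length + w.length ≤ N) :
    leibTriple (g a * rnWord g i u) (rnWord g j v) (rnWord g k w)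
      + leibTriple (rnWord g i u) (g a * rnWord g j v) (rnWord g k w)
      + leibTriple (rnWord g i u) (rnWord g j v) (g a * rnWord g k w) = 0 := by
  have h1 := congrArg DualRing.ep (hD a i j k u v w hl)
  rw [DualRing.lt_ep, dual_word g a N hN i u (by omega), dual_word g a N hN j v (by omega),
    dual_word g a N hN k w (by omega)] at h1
  exact h1

theorem bool_cases : ∀ a i j : Bool, ¬ i = j → a = i ∨ a = j := by decide

theorem gen_step (h : GoodRing A) (g : Bool → A) (N : ℕ) (hN : WordsVanish g N)
    (hD : ∀ a, WordsVanish (dualGen g a) N) (i j k : Bool) (v w : List Bool)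
    (hl : v.length + w.length = N + 1) :
    leibTriple (g i) (rnWord g j v) (rnWord g k w) = 0 := by
  have inv := invariance g N hN hD
  -- J(x, y, w) = 0
  have t : ∀ (i j k : Bool) (w : List Bool), w.length = N + 1 →
      leibTriple (g i) (g j) (rnWord g k w) = 0 := by
    intro i j k w hw
    rcases w with _ | ⟨a, w⟩
    · simp at hw
    simp only [List.length_cons, Nat.add_right_cancel_iff] at hw
    by_cases hij : i = j
    · subst hij; exact h.aab _ _
    have h1 := inv a i j k [] [] w (by simp; omega)
    simp only [rnWord] at h1 ⊢
    have ha : a = i ∨ a = j := bool_cases a i j hij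
    apply h.two
    rcases ha with rfl | rfl
    · rw [h.sq1, zero_add, h.key] at h1
      exact h1
    · rw [h.sq2, add_zero, h.s12 (g a), h.key, h.s12 (g i) (g a), neg_neg] at h1
      exact h1
  -- J(x, x u, v) = 0
  have s : ∀ (i j k : Bool) (v w : List Bool), v.length + w.length ≤ N →
      leibTriple (g i) (g i * rnWord g j v) (rnWord g k w) = 0 := by
    intro i j k v w hl
    have h1 := inv i i j k [] v w (by simpa using hl)
    simp only [rnWord] at h1
    rw [h.sq1, zero_add, ← h.key] at h1
    exact h.two _ h1
  -- J(x, y u, v) + J(y, x u, v) = 0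
  have r : ∀ (i i' j k : Bool) (v w : List Bool), v.length + w.length ≤ N →
      leibTriple (g i) (g i' * rnWord g j v) (rnWord g k w)
        = - leibTriple (g i') (g i * rnWord g j v) (rnWord g k w) := by
    intro i i' j k v w hl
    have h1 := inv i' i j k [] v w (by simpa using hl)
    have h2 := inv i i' j k [] v w (by simpa using hl)
    simp only [rnWord] at h1 h2
    have h3 := h.key_lin (g i) (g i') (rnWord g j v) (rnWord g k w)
    have h4 := h.jordan1 (g i') (g i) (rnWord g j v) (rnWord g k w)
    rw [lt_add1] at h4
    apply eq_neg_of_add_eq_zero_left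
    apply h.two
    nth_rewrite 2 [h3]
    rw [← add_zero (0 : A)]
    nth_rewrite 1 [← h1]
    rw [← h2, ← sub_eq_zero, ← neg_eq_zero, ← h4]
    abel
  rcases v with _ | ⟨b, v⟩
  · exact t i j k w (by simpa using hl)
  rcases w with _ | ⟨c, w⟩
  · rw [h.s23]
    simp only [neg_eq_zero]
    exact t i k j (b :: v) (by simpa using hl)
  simp only [List.length_cons] at hl
  by_cases hb : b = i
  · subst hb
    exact s b j k v (c :: w) (by simp; omega)
  by_cases hc : c = i
  · subst hc
    rw [h.s23]
    simp only [neg_eq_zero]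
    exact s c k j w (b :: v) (by simp; omega)
  have hbc : b = c := by revert b c i; decide
  subst hbc
  have h1 := r i b j k v (b :: w) (by simp; omega)
  have h2 := s b k j w (i :: v) (by simp; omega)
  simp only [rnWord] at h1 h2 ⊢
  rw [h1, h.s23, h2]
  simp

theorem step (h : GoodRing A) (g : Bool → A) (N : ℕ) (hN : WordsVanish g N)
    (hD : ∀ a, WordsVanish (dualGen g a) N) : WordsVanish g (N + 1) := by
  intro i j k u
  induction u with
  | nil =>
    intro v w hl
    simp only [List.length_nil, zero_add] at hl
    by_cases h1 : v.length + w.length ≤ N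
    · exact hN i j k [] v w (by simpa using h1)
    · exact gen_step h g N hN hD i j k v w (by omega)
  | cons a u ih =>
    intro v w hl
    simp only [List.length_cons] at hl
    have h1 := invariance g N hN hD a i j k u v w (by omega)
    have h2 := ih (a :: v) w (by simp; omega)
    have h3 := ih v (a :: w) (by simp; omega)
    simp only [rnWord] at h1 h2 h3 ⊢
    rwa [h2, h3, add_zero, add_zero] at h1

end words

theorem words_vanish (N : ℕ) : ∀ {A : Type*} [NonUnitalNonAssocRing A] (_ : GoodRing A)
    (g : Bool → A), WordsVanish g N := by
  induction N with
  | zero =>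
    intro A _ h g i j k u v w hl
    obtain rfl : u = [] := List.length_eq_zero_iff.mp (by omega)
    obtain rfl : v = [] := List.length_eq_zero_iff.mp (by omega)
    obtain rfl : w = [] := List.length_eq_zero_iff.mp (by omega)
    simp only [rnWord]
    have hh : i = j ∨ i = k ∨ j = k := by revert i j k; decide
    rcases hh with rfl | rfl | rfl
    · exact h.aab _ _
    · exact h.aba _ _
    · exact h.abb _ _
  | succ N ih =>
    intro A _ h g
    exact step h g N (ih h g) fun a => ih (DualRing.good h) _

section span
variable {K A : Type*} [Field K] [NonUnitalNonAssocRing A] [Module K A]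
    [SMulCommClass K A A] [IsScalarTower K A A]

theorem lt_smul1 (r : K) (a b c : A) : leibTriple (r • a) b c = r • leibTriple a b c := by
  simp only [leibTriple, smul_mul_assoc, mul_smul_comm, smul_add, smul_sub]

theorem lt_smul2 (r : K) (a b c : A) : leibTriple a (r • b) c = r • leibTriple a b c := by
  simp only [leibTriple, smul_mul_assoc, mul_smul_comm, smul_add, smul_sub]

theorem lt_smul3 (r : K) (a b c : A) : leibTriple a b (r • c) = r • leibTriple a b c := by
  simp only [leibTriple, mul_smul_comm, smul_add, smul_sub]

/-- The span of the right-normed words. -/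
def wordSpan (K : Type*) {A : Type*} [Field K] [NonUnitalNonAssocRing A] [Module K A]
    (g : Bool → A) : Submodule K A :=
  Submodule.span K {a | ∃ k m, a = rnWord g k m}

theorem word_mem (g : Bool → A) (k : Bool) (m : List Bool) :
    rnWord g k m ∈ wordSpan K g := Submodule.subset_span ⟨k, m, rfl⟩

theorem gen_mul_mem (g : Bool → A) (a : Bool) {v : A} (hv : v ∈ wordSpan K g) :
    g a * v ∈ wordSpan K g := by
  induction hv using Submodule.span_induction with
  | mem v hv =>
    obtain ⟨k, m, rfl⟩ := hv
    exact word_mem g k (a :: m)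
  | zero => simp
  | add v w _ _ h1 h2 => rw [mul_add]; exact add_mem h1 h2
  | smul r v _ h1 => rw [mul_smul_comm]; exact Submodule.smul_mem _ _ h1

theorem span_lt (g : Bool → A) (hg : ∀ N, WordsVanish g N) {a b c : A}
    (ha : a ∈ wordSpan K g) (hb : b ∈ wordSpan K g) (hc : c ∈ wordSpan K g) :
    leibTriple a b c = 0 := by
  induction ha using Submodule.span_induction with
  | mem a ha =>
    obtain ⟨i, u, rfl⟩ := ha
    induction hb using Submodule.span_induction with
    | mem b hb =>
      obtain ⟨j, v, rfl⟩ := hb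
      induction hc using Submodule.span_induction with
      | mem c hc =>
        obtain ⟨k, w, rfl⟩ := hc
        exact hg _ i j k u v w le_rfl
      | zero => simp [leibTriple]
      | add v w _ _ h1 h2 => rw [lt_add3, h1, h2, add_zero]
      | smul r v _ h1 => rw [lt_smul3, h1, smul_zero]
    | zero => simp [leibTriple]
    | add v w _ _ h1 h2 => rw [lt_add2, h1, h2, add_zero]
    | smul r v _ h1 => rw [lt_smul2, h1, smul_zero]
  | zero => simp [leibTriple]
  | add v w _ _ h1 h2 => rw [lt_add1, h1, h2, add_zero]
  | smul r v _ h1 => rw [lt_smul1, h1, smul_zero]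

theorem span_mul (g : Bool → A) (hg : ∀ N, WordsVanish g N) {a b : A}
    (ha : a ∈ wordSpan K g) (hb : b ∈ wordSpan K g) : a * b ∈ wordSpan K g := by
  induction ha using Submodule.span_induction with
  | mem a ha =>
    obtain ⟨i, u, rfl⟩ := ha
    induction u generalizing b with
    | nil => exact gen_mul_mem g i hb
    | cons k u ih =>
      have h1 := span_lt g hg (word_mem (K := K) g k []) (word_mem g i u) hb
      simp only [rnWord, leibTriple] at h1 ⊢
      have h2 : g k * rnWord g i u * b = g k * (rnWord g i u * b) - rnWord g i u * (g k * b) := by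
        rw [← sub_eq_zero, ← h1]; abel
      rw [h2]
      exact sub_mem (gen_mul_mem g k (ih hb)) (ih (gen_mul_mem g k hb))
  | zero => simp
  | add v w _ _ h1 h2 => rw [add_mul]; exact add_mem h1 h2
  | smul r v _ h1 => rw [smul_mul_assoc]; exact Submodule.smul_mem _ _ h1

end span

theorem stmt_2 {K A : Type*} [Field K] [NonUnitalNonAssocRing A] [Module K A]
    [SMulCommClass K A A] [IsScalarTower K A A] (hchar : (2 : K) ≠ 0) :
    (∀ x y : A, ∀ a ∈ NonUnitalAlgebra.adjoin K ({x, y} : Set A),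
      ∀ b ∈ NonUnitalAlgebra.adjoin K ({x, y} : Set A),
      ∀ c ∈ NonUnitalAlgebra.adjoin K ({x, y} : Set A), leibTriple a b c = 0) ↔
    (∀ a b : A, leibTriple a a b = 0 ∧ leibTriple a b a = 0 ∧
      leibTriple a b (a * b) = 0) := by
  constructor
  · intro H a b
    have ha : a ∈ NonUnitalAlgebra.adjoin K ({a, b} : Set A) :=
      NonUnitalAlgebra.subset_adjoin K (by simp)
    have hb : b ∈ NonUnitalAlgebra.adjoin K ({a, b} : Set A) :=
      NonUnitalAlgebra.subset_adjoin K (by simp)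
    exact ⟨H a b a ha a ha b hb, H a b a ha b hb a ha, H a b a ha b hb _ (mul_mem ha hb)⟩
  · intro H x y a ha b hb c hc
    have good : GoodRing A :=
      { two := by
          intro a h2
          rw [← two_smul K a] at h2
          exact (smul_eq_zero.mp h2).resolve_left hchar
        aab := fun a b => (H a b).1
        aba := fun a b => (H a b).2.1
        abab := fun a b => (H a b).2.2 }
    let g : Bool → A := fun i => if i then x else y
    have hg : ∀ N, WordsVanish g N := fun N => words_vanish N good g
    have hle : ∀ a ∈ NonUnitalAlgebra.adjoin K ({x, y} : Set A), a ∈ wordSpan K g := by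
      intro a ha
      induction ha using NonUnitalAlgebra.adjoin_induction with
      | mem a ha =>
        rcases ha with rfl | rfl
        · exact word_mem g true []
        · exact word_mem g false []
      | add v w _ _ h1 h2 => exact add_mem h1 h2
      | zero => exact zero_mem _
      | mul v w _ _ h1 h2 => exact span_mul g hg h1 h2
      | smul r v _ h1 => exact Submodule.smul_mem _ _ h1
    exact span_lt g hg (hle a ha) (hle b hb) (hle c hc)
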